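/- arXiv:1008.3497 — 2 statements merged into one kernel-verified Lean document; each statement's English description precedes it below -/
import Mathlib

section
/- Let A be a C*-algebra and let a', a, b be positive elements of A such that a' ⊂⊂ a and a ≾ b. Then there exists a positive element c ∈ A such that, in the 2×2 matrix algebra M₂(A), diag(a', c) ≾ diag(b, 0) and diag(b, 0) ≾ diag(a, c). (Almost algebraic order.) -/
/-!
Write `a ≈ p = y⋆ y` with `y = √b z`, so that `q = y y⋆` lies in the hereditary subalgebra `A_b`.
For a cut-off `h` vanishing up to a small scale `δ`, put `c = √b (1 - h(q))² √b`. Then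

* `b - c = √b (2 h(q) - h(q)²) √b = (y⋆ √b)⋆ φ(p) (y⋆ √b)` with `φ` supported above `δ`. Since
  `‖a - p‖ < δ`, one gets `φ(p) ≾ a`, hence `diag(b, 0) ≾ diag(a, c)`.
* If `e a' = a'` with `e` close to `a k a`, then `e` is also close to `g(p) p k p` for a cut-off `g`
  with `h g = g`, so `a' = S⋆ S` with `S` in the closed right ideal of `g(p)`. The polar part of `y`
  transports `S` to `R₁ = y ψ(p) S` in `√b A` with `R₁⋆ R₁ = a'` and `(1 - h(q)) R₁ = 0`. The
  row `(R₁, (1 - h(q)) √b)` has Gram matrix `diag(a', c)`, hence `diag(a', c) ≾ diag(b, 0)`.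

Both times an approximate factorization becomes exact by inverting `1 + E` with `‖E‖ < 1`
(`exists_mem_rightIdeal_star_mul_self`). The element `h(q)` is realized as `y χ(p) y⋆` with
`χ(t) = h(t) / t`, so only functional calculus of `p` occurs (`exists_cutoffs`).
-/

open Filter Topology

noncomputable section

variable {A : Type*}

/-- The hereditary subalgebra `A_a`: the norm-closure of `{a * x * a : x ∈ A}`. -/
def herSub [NonUnitalCStarAlgebra A] (a : A) : Set A :=
  closure {y : A | ∃ x : A, y = a * x * a}

/-- The right ideal `E_a`: the norm-closure of `{a * x : x ∈ A}`. -/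
def rightIdeal [NonUnitalCStarAlgebra A] (a : A) : Set A :=
  closure {y : A | ∃ x : A, y = a * x}

/-- Pedersen equivalence: `a = x* x` and `b = x x*` for some `x`. -/
def PedersenEquiv [NonUnitalCStarAlgebra A] (a b : A) : Prop :=
  ∃ x : A, a = star x * x ∧ b = x * star x

/-- Blackadar equivalence `a ∼ₛ b`: there is `x ∈ A` with `A_a = A_{x*x}` and `A_b = A_{xx*}`. -/
def BlackadarEquiv [NonUnitalCStarAlgebra A] (a b : A) : Prop :=
  ∃ x : A, herSub a = herSub (star x * x) ∧ herSub b = herSub (x * star x)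

/-- Blackadar subequivalence `a ≾ₛ b`: there is a positive `a' ∈ A_b` with `a ∼ₛ a'`. -/
def BlackadarLe [NonUnitalCStarAlgebra A] [PartialOrder A] (a b : A) : Prop :=
  ∃ a' : A, 0 ≤ a' ∧ a' ∈ herSub b ∧ BlackadarEquiv a a'

/-- Cuntz subequivalence `a ≾ b`: there is a sequence `xₙ` with `‖xₙ* b xₙ - a‖ → 0`. -/
def CuntzLe [NonUnitalCStarAlgebra A] (a b : A) : Prop :=
  ∃ x : ℕ → A, Tendsto (fun n => ‖star (x n) * b * x n - a‖) atTop (𝓝 0)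

/-- Cuntz equivalence `a ≈ b`. -/
def CuntzEquiv [NonUnitalCStarAlgebra A] (a b : A) : Prop :=
  CuntzLe a b ∧ CuntzLe b a

/-- Compact containment `a ⊂⊂ b`: there is a positive `e ∈ A_b` with `e * a = a`. -/
def CpctContained [NonUnitalCStarAlgebra A] [PartialOrder A] (a b : A) : Prop :=
  ∃ e : A, 0 ≤ e ∧ e ∈ herSub b ∧ e * a = a

attribute [local instance] Matrix.linftyOpNonUnitalNormedRing

/-- Cuntz subequivalence in the 2×2 matrix algebra `M₂(A)`. -/
def CuntzLeM2 [NonUnitalCStarAlgebra A] (x y : Matrix (Fin 2) (Fin 2) A) : Prop :=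
  ∃ z : ℕ → Matrix (Fin 2) (Fin 2) A,
    Tendsto (fun n => ‖star (z n) * y * z n - x‖) atTop (𝓝 0)

/-! ### Square roots and closed right ideals -/

/-- A positive element has a self-adjoint square root, which lies in the closed right ideal
generated by the element itself. -/
lemma exists_sqrt [NonUnitalCStarAlgebra A] [PartialOrder A] [StarOrderedRing A]
    {x : A} (hx : 0 ≤ x) : ∃ s : A, star s = s ∧ s * s = x ∧ s ∈ rightIdeal x := by
  have hsa : IsSelfAdjoint x := .of_nonneg hx
  have hsp : ∀ t ∈ quasispectrum ℝ x, 0 ≤ t := quasispectrum_nonneg_of_nonneg x hx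
  refine ⟨cfcₙ Real.sqrt x, (cfcₙ_predicate Real.sqrt x : IsSelfAdjoint _), ?_, ?_⟩
  · rw [← cfcₙ_mul Real.sqrt Real.sqrt x]
    conv_rhs => rw [← cfcₙ_id' ℝ x]
    exact cfcₙ_congr fun t ht => Real.mul_self_sqrt (hsp t ht)
  · refine Metric.mem_closure_iff.2 fun ε hε => ?_
    have hδ : 0 < (ε / 2) ^ 2 := by positivity
    -- `√x` is approximated by `x f(x)` with `f(t) = √t / max δ t`: the two functions agree for
    -- `t ≥ δ` and differ by at most `√δ = ε / 2` below.
    set δ := (ε / 2) ^ 2 with hδe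
    have hm : ∀ t : ℝ, 0 < max δ t := fun t => lt_max_of_lt_left hδ
    have hc : Continuous fun t : ℝ => √t / max δ t :=
      Real.continuous_sqrt.div (by fun_prop) fun t => (hm t).ne'
    refine ⟨_, ⟨cfcₙ (fun t : ℝ => √t / max δ t) x, rfl⟩, ?_⟩
    rw [dist_eq_norm]
    have : x * cfcₙ (fun t : ℝ => √t / max δ t) x
        = cfcₙ (fun t : ℝ => t * (√t / max δ t)) x := by
      conv_lhs => rw [← cfcₙ_id' ℝ x, cfcₙ_id' ℝ x]
      nth_rw 1 [← cfcₙ_id' ℝ x]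
      rw [← cfcₙ_mul (fun t : ℝ => t) _ x (by fun_prop) (by simp) hc.continuousOn (by simp)]
    rw [this, ← cfcₙ_sub Real.sqrt (fun t => t * (√t / max δ t)) x (by fun_prop) (by simp)
      (continuous_id.mul hc).continuousOn (by simp)]
    refine (norm_cfcₙ_le (c := ε / 2) fun t ht => ?_).trans_lt (half_lt_self hε)
    have ht0 := hsp t ht
    rw [Real.norm_eq_abs]
    rcases le_total δ t with h | h
    · have : t ≠ 0 := (hδ.trans_le h).ne'
      rw [max_eq_right h, mul_div_cancel₀ _ this, sub_self, abs_zero]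
      positivity
    · rw [max_eq_left h]
      have h1 : √t ≤ ε / 2 := Real.sqrt_le_iff.2 ⟨by positivity, h⟩
      have h2 : t * (√t / δ) = (t / δ) * √t := by ring
      have h3 : t / δ ≤ 1 := (div_le_one hδ).2 h
      have h4 : 0 ≤ t / δ := by positivity
      have h5 := Real.sqrt_nonneg t
      rw [h2, abs_of_nonneg] <;> nlinarith

lemma mem_rightIdeal_mul_right [NonUnitalCStarAlgebra A] {x s : A} (hs : s ∈ rightIdeal x)
    (m : A) : s * m ∈ rightIdeal x := by
  refine map_mem_closure (f := fun u => u * m) (by fun_prop) hs ?_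
  rintro _ ⟨y, rfl⟩
  exact ⟨y * m, mul_assoc _ _ _⟩

lemma rightIdeal_mul_subset [NonUnitalCStarAlgebra A] (x m : A) :
    rightIdeal (x * m) ⊆ rightIdeal x := by
  refine closure_mono ?_
  rintro _ ⟨y, rfl⟩
  exact ⟨m * y, mul_assoc _ _ _⟩

/-- Left multiplications that agree on `g` agree on the closed right ideal generated by `g`. -/
lemma mul_eq_mul_of_mem_rightIdeal [NonUnitalCStarAlgebra A] {g u v S : A} (h : u * g = v * g)
    (hS : S ∈ rightIdeal g) : u * S = v * S := by
  refine closure_minimal (t := {S | u * S = v * S}) ?_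
    (isClosed_eq (by fun_prop) (by fun_prop)) hS
  rintro _ ⟨y, rfl⟩
  change u * (g * y) = v * (g * y)
  rw [← mul_assoc, h, mul_assoc]

/-- A left identity for `g` is a left identity for the closed right ideal generated by `g`. -/
lemma mul_eq_self_of_mem_rightIdeal [NonUnitalCStarAlgebra A] {g u S : A} (h : u * g = g)
    (hS : S ∈ rightIdeal g) : u * S = S := by
  refine closure_minimal (t := {S | u * S = S}) ?_ (isClosed_eq (by fun_prop) (by fun_prop)) hS
  rintro _ ⟨y, rfl⟩
  change u * (g * y) = g * y
  rw [← mul_assoc, h]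

/-- If `s² = x`, elements of the closed right ideal of `x` are limits of elements of `s A`, which
is the form needed to produce `r⋆ x r = (s r)⋆ (s r)` when `s` is self-adjoint. -/
lemma exists_seq_mul_tendsto [NonUnitalCStarAlgebra A] {x s S : A} (hs : s * s = x)
    (hS : S ∈ rightIdeal x) : ∃ r : ℕ → A, Tendsto (fun n => s * r n) atTop (𝓝 S) := by
  obtain ⟨y, hy, hlim⟩ := mem_closure_iff_seq_limit.1 hS
  choose r hr using hy
  refine ⟨fun n => s * r n, ?_⟩
  simpa only [← mul_assoc, hs, ← hr] using hlim

/-! ### Exact factorizations from approximate ones -/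

/-- An element `E` of norm less than one has a right quasi-inverse: `(1 + E) (1 + f) = 1` in the
unitization. -/
lemma exists_quasiInverse [NonUnitalCStarAlgebra A] {E : A} (hE : ‖E‖ < 1) :
    ∃ f : A, f + E + E * f = 0 := by
  have hc : ContractingWith ‖E‖₊ fun f : A => -E - E * f := by
    refine ⟨by exact_mod_cast hE, LipschitzWith.of_dist_le_mul fun x y => ?_⟩
    rw [dist_eq_norm, dist_eq_norm]
    have : -E - E * x - (-E - E * y) = -(E * (x - y)) := by rw [mul_sub]; abel
    rw [this, norm_neg]
    exact norm_mul_le _ _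
  have h := hc.fixedPoint_isFixedPt
  refine ⟨ContractingWith.fixedPoint _ hc, ?_⟩
  have h' : -E - E * ContractingWith.fixedPoint _ hc = ContractingWith.fixedPoint _ hc := h
  nth_rw 1 [← h']
  abel

/-- If `(1 + E) s = d r` with `‖E‖ < 1`, then `s⋆ s` can be rewritten as `S⋆ S` with `S` in the
closed right ideal generated by `d⋆`: writing `t = (1 + E)⁻¹ d`, one has `s = t r`, and
`S = |t| r` works since `t⋆ t` lies in that right ideal. -/
lemma exists_mem_rightIdeal_star_mul_self [NonUnitalCStarAlgebra A] [PartialOrder A]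
    [StarOrderedRing A] {E s d r : A} (hE : ‖E‖ < 1) (h : s + E * s = d * r) :
    ∃ S ∈ rightIdeal (star d), star S * S = star s * s := by
  obtain ⟨f, hf⟩ := exists_quasiInverse hE
  set t := d + f * d with ht
  have ht1 : t + E * t = d := by
    have : t + E * t = d + (f + E + E * f) * d := by rw [ht]; noncomm_ring
    rw [this, hf, zero_mul, add_zero]
  have hstr : s = t * r := by
    have h0 : (s - t * r) = -(E * (s - t * r)) := by
      have : t * r + E * (t * r) = s + E * s := by rw [h, ← ht1]; noncomm_ring
      rw [eq_neg_iff_add_eq_zero, mul_sub]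
      calc _ = (s + E * s) - (t * r + E * (t * r)) := by abel
        _ = 0 := by rw [this, sub_self]
    have h1 : ‖s - t * r‖ ≤ ‖E‖ * ‖s - t * r‖ := by
      conv_lhs => rw [h0, norm_neg]
      exact norm_mul_le _ _
    have h2 : ‖s - t * r‖ = 0 := by nlinarith [norm_nonneg (s - t * r)]
    exact sub_eq_zero.1 (norm_eq_zero.1 h2)
  obtain ⟨q, hq, hqq, hqm⟩ := exists_sqrt (star_mul_self_nonneg t)
  refine ⟨q * r, mem_rightIdeal_mul_right ?_ r, ?_⟩
  · have : star t * t = star d * (t + star f * t) := by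
      nth_rw 1 [ht]
      simp only [star_add, star_mul]
      noncomm_ring
    rw [this] at hqm
    exact rightIdeal_mul_subset _ _ hqm
  · rw [hstr, star_mul, star_mul, hq]
    calc star r * q * (q * r) = star r * (q * q) * r := by noncomm_ring
      _ = _ := by rw [hqq]; noncomm_ring

/-! ### Cut-offs by functional calculus -/

/-- Cut-offs of a positive `p` at scale `δ`, as functional calculus of `p`. With `h(t)` rising from
`0` at `δ` to `1` at `2δ`: `w` is an inverse of `p` above `δ`, `χ = h w`, `ψ = √w`,
`σ = √(χ (2 - h))`, and `g` rises from `0` at `2δ` to `1` at `3δ`. -/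
lemma exists_cutoffs [NonUnitalCStarAlgebra A] [PartialOrder A] [StarOrderedRing A]
    {p : A} (hp : 0 ≤ p) {δ : ℝ} (hδ : 0 < δ) :
    ∃ w g χ σ ψ : A, star g = g ∧ star χ = χ ∧ star σ = σ ∧ star ψ = ψ ∧
      ‖w‖ ≤ δ⁻¹ ∧ ‖p - g * p‖ ≤ 3 * δ ∧ σ * σ = χ + χ - χ * p * χ ∧ w * p * σ = σ ∧
      ψ * p * ψ * g = g ∧ χ * p * ψ * g = ψ * g := by
  have hsa : IsSelfAdjoint p := .of_nonneg hp
  have hsp : ∀ t ∈ quasispectrum ℝ p, 0 ≤ t := quasispectrum_nonneg_of_nonneg p hp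
  let W : ℝ → ℝ := fun t => max 0 t / (max δ t) ^ 2
  let H : ℝ → ℝ := fun t => min 1 (max 0 (t / δ - 1))
  let G : ℝ → ℝ := fun t => min 1 (max 0 (t / δ - 2))
  let X : ℝ → ℝ := fun t => H t * W t
  let T : ℝ → ℝ := fun t => √(X t * (2 - H t))
  let Ψ : ℝ → ℝ := fun t => √(W t)
  have hm : ∀ t : ℝ, 0 < max δ t := fun t => lt_max_of_lt_left hδ
  have cW : Continuous W := by
    exact Continuous.div (by fun_prop) (by fun_prop) fun t => (pow_pos (hm t) 2).ne'
  have cH : Continuous H := by fun_prop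
  have cG : Continuous G := by fun_prop
  have cX : Continuous X := by fun_prop
  have cS : Continuous T := by fun_prop
  have cΨ : Continuous Ψ := by fun_prop
  have W0 : W 0 = 0 := by simp [W]
  have G0 : G 0 = 0 := by simp [G]
  have X0 : X 0 = 0 := by simp [X, W0]
  have S0 : T 0 = 0 := by simp [T, X0]
  have Ψ0 : Ψ 0 = 0 := by simp [Ψ, W0]
  have hWnn : ∀ t, 0 ≤ W t := fun t => div_nonneg (le_max_left _ _) (sq_nonneg _)
  have hHnn : ∀ t, 0 ≤ H t := fun t => le_min zero_le_one (le_max_left _ _)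
  have hH1 : ∀ t, H t ≤ 1 := fun t => min_le_left _ _
  have hXnn : ∀ t, 0 ≤ X t := fun t => mul_nonneg (hHnn t) (hWnn t)
  have hW : ∀ t, δ ≤ t → W t * t = 1 := fun t ht => by
    have : 0 < t := hδ.trans_le ht
    simp only [W, max_eq_right ht, max_eq_right this.le]
    field_simp
  have hHlow : ∀ t, t ≤ δ → H t = 0 := fun t ht => by
    have : t / δ ≤ 1 := (div_le_one hδ).2 ht
    simp only [H]
    rw [max_eq_left (by linarith), min_eq_right zero_le_one]
  have hHhigh : ∀ t, 2 * δ ≤ t → H t = 1 := fun t ht => by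
    have : 2 ≤ t / δ := (le_div_iff₀ hδ).2 ht
    simp only [H]
    exact min_eq_left (le_max_of_le_right (by linarith))
  have hGlow : ∀ t, t ≤ 2 * δ → G t = 0 := fun t ht => by
    have : t / δ ≤ 2 := (div_le_iff₀ hδ).2 ht
    simp only [G]
    rw [max_eq_left (by linarith), min_eq_right zero_le_one]
  have hGhigh : ∀ t, 3 * δ ≤ t → G t = 1 := fun t ht => by
    have : 3 ≤ t / δ := (le_div_iff₀ hδ).2 ht
    simp only [G]
    exact min_eq_left (le_max_of_le_right (by linarith))
  have hG1 : ∀ t, G t ≤ 1 := fun t => min_le_left _ _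
  have hGnn : ∀ t, 0 ≤ G t := fun t => le_min zero_le_one (le_max_left _ _)
  have hXt : ∀ t, X t * t = H t := fun t => by
    rcases le_total δ t with h | h
    · simp only [X]; rw [mul_assoc, hW t h, mul_one]
    · simp only [X]; rw [hHlow t h]; simp
  have mulc : ∀ f k : ℝ → ℝ, Continuous f → Continuous k → f 0 = 0 → k 0 = 0 →
      cfcₙ f p * cfcₙ k p = cfcₙ (fun t => f t * k t) p := fun f k hf hk f0 k0 =>
    (cfcₙ_mul f k p hf.continuousOn f0 hk.continuousOn k0).symm
  have hid : p = cfcₙ (fun t : ℝ => t) p := (cfcₙ_id' ℝ p).symm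
  refine ⟨cfcₙ W p, cfcₙ G p, cfcₙ X p, cfcₙ T p, cfcₙ Ψ p,
    (cfcₙ_predicate G p : IsSelfAdjoint _), (cfcₙ_predicate X p : IsSelfAdjoint _),
    (cfcₙ_predicate T p : IsSelfAdjoint _), (cfcₙ_predicate Ψ p : IsSelfAdjoint _),
    ?_, ?_, ?_, ?_, ?_, ?_⟩
  · refine norm_cfcₙ_le fun t ht => ?_
    rw [Real.norm_of_nonneg (hWnn t)]
    simp only [W]
    rw [max_eq_right (hsp t ht), inv_eq_one_div, div_le_div_iff₀ (pow_pos (hm t) 2) hδ]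
    nlinarith [le_max_left δ t, le_max_right δ t, hsp t ht]
  · have h1 : cfcₙ G p * p = cfcₙ (fun t => G t * t) p := by
      nth_rw 2 [hid]
      exact mulc _ _ cG continuous_id G0 rfl
    have h2 : p - cfcₙ G p * p = cfcₙ (fun t => t - G t * t) p := by
      rw [h1]
      nth_rw 1 [hid]
      exact (cfcₙ_sub (fun t : ℝ => t) (fun t => G t * t) p (by fun_prop) rfl
        (by fun_prop) (by simp)).symm
    rw [h2]
    refine norm_cfcₙ_le fun t ht => ?_
    have ht0 := hsp t ht
    rw [Real.norm_of_nonneg (by nlinarith [hG1 t])]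
    rcases le_total (3 * δ) t with h | h
    · rw [hGhigh t h]; linarith
    · nlinarith [hGnn t]
  · have h1 : cfcₙ X p * p * cfcₙ X p = cfcₙ (fun t => X t * t * X t) p := by
      nth_rw 2 [hid]
      rw [mulc X (fun t => t) cX continuous_id X0 rfl,
        mulc (fun t => X t * t) X (by fun_prop) cX (by simp) X0]
    rw [h1, mulc _ _ cS cS S0 S0, ← cfcₙ_add X X p cX.continuousOn X0 cX.continuousOn X0,
      ← cfcₙ_sub (fun t => X t + X t) (fun t => X t * t * X t) p
        (by fun_prop) (by simp [X0]) (by fun_prop) (by simp)]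
    refine cfcₙ_congr fun t _ => ?_
    have h2 : 0 ≤ X t * (2 - H t) := mul_nonneg (hXnn t) (by linarith [hH1 t])
    simp only [T]
    rw [Real.mul_self_sqrt h2, hXt]
    ring
  · have h1 : cfcₙ W p * p * cfcₙ T p = cfcₙ (fun t => W t * t * T t) p := by
      nth_rw 2 [hid]
      rw [mulc W (fun t => t) cW continuous_id W0 rfl,
        mulc (fun t => W t * t) T (by fun_prop) cS (by simp) S0]
    rw [h1]
    refine cfcₙ_congr fun t _ => ?_
    rcases le_total δ t with h | h
    · simp only [hW t h, one_mul]
    · have : T t = 0 := by simp [T, X, hHlow t h]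
      simp only [this, mul_zero]
  · have h1 : cfcₙ Ψ p * p * cfcₙ Ψ p * cfcₙ G p
        = cfcₙ (fun t => Ψ t * t * Ψ t * G t) p := by
      nth_rw 2 [hid]
      rw [mulc Ψ (fun t => t) cΨ continuous_id Ψ0 rfl,
        mulc (fun t => Ψ t * t) Ψ (by fun_prop) cΨ (by simp) Ψ0,
        mulc (fun t => Ψ t * t * Ψ t) G (by fun_prop) cG (by simp) G0]
    rw [h1]
    refine cfcₙ_congr fun t _ => ?_
    rcases le_total (2 * δ) t with h | h
    · have h2 : Ψ t * t * Ψ t = 1 := by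
        calc Ψ t * t * Ψ t = (√(W t) * √(W t)) * t := by simp only [Ψ]; ring
          _ = 1 := by rw [Real.mul_self_sqrt (hWnn t), hW t (by linarith)]
      simp only [h2, one_mul]
    · simp only [hGlow t h, mul_zero]
  · have h1 : cfcₙ X p * p * cfcₙ Ψ p * cfcₙ G p
        = cfcₙ (fun t => X t * t * Ψ t * G t) p := by
      nth_rw 2 [hid]
      rw [mulc X (fun t => t) cX continuous_id X0 rfl,
        mulc (fun t => X t * t) Ψ (by fun_prop) cΨ (by simp) Ψ0,
        mulc (fun t => X t * t * Ψ t) G (by fun_prop) cG (by simp) G0]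
    rw [h1, mulc Ψ G cΨ cG Ψ0 G0]
    refine cfcₙ_congr fun t _ => ?_
    rcases le_total (2 * δ) t with h | h
    · simp only [hXt, hHhigh t h, one_mul]
    · simp only [hGlow t h, mul_zero]

/-! ### Cuntz subequivalence of diagonal matrices -/

/-- Entrywise convergence implies convergence in norm in `M₂(A)`. -/
lemma tendsto_norm_sub_of_entries [NonUnitalCStarAlgebra A]
    {M : ℕ → Matrix (Fin 2) (Fin 2) A} {N : Matrix (Fin 2) (Fin 2) A}
    (h : ∀ i j, Tendsto (fun n => M n i j) atTop (𝓝 (N i j))) :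
    Tendsto (fun n => ‖M n - N‖) atTop (𝓝 0) := by
  have h0 : Tendsto (fun n => ∑ i, ∑ j, ‖(M n - N) i j‖) atTop (𝓝 0) := by
    have : Tendsto (fun n => ∑ i : Fin 2, ∑ j : Fin 2, ‖(M n - N) i j‖) atTop
        (𝓝 (∑ _i : Fin 2, ∑ _j : Fin 2, 0)) :=
      tendsto_finsetSum _ fun i _ => tendsto_finsetSum _ fun j _ =>
        tendsto_iff_norm_sub_tendsto_zero.1 (h i j)
    simpa using this
  refine squeeze_zero (fun n => norm_nonneg _) (fun n => ?_) h0
  have : ‖M n - N‖₊ ≤ ∑ i, ∑ j, ‖(M n - N) i j‖₊ := by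
    rw [Matrix.linfty_opNNNorm_def]
    exact Finset.sup_le fun i hi => Finset.single_le_sum
      (f := fun i => ∑ j, ‖(M n - N) i j‖₊) (fun _ _ => zero_le) hi
  exact_mod_cast this

/-- A row `(s r₁, s r₂)` with `s² = b` whose Gram matrix is `diag(x, y)` in the limit witnesses
`diag(x, y) ≾ diag(b, 0)`. -/
lemma cuntzLeM2_diagonal_of_row [NonUnitalCStarAlgebra A] {s b x y R₁ R₂ : A} (hs : star s = s)
    (hsb : s * s = b) {r₁ r₂ : ℕ → A} (h₁ : Tendsto (fun n => s * r₁ n) atTop (𝓝 R₁))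
    (h₂ : Tendsto (fun n => s * r₂ n) atTop (𝓝 R₂)) (hx : star R₁ * R₁ = x)
    (hy : star R₂ * R₂ = y) (h0 : star R₁ * R₂ = 0) :
    CuntzLeM2 (Matrix.diagonal ![x, y]) (Matrix.diagonal ![b, 0]) := by
  have h0' : star R₂ * R₁ = 0 := by simpa using congrArg star h0
  refine ⟨fun n => !![r₁ n, r₂ n; 0, 0], tendsto_norm_sub_of_entries fun i j => ?_⟩
  have key : ∀ u v : A, star u * b * v = star (s * u) * (s * v) := fun u v => by
    rw [star_mul, hs, ← hsb]; noncomm_ring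
  fin_cases i <;> fin_cases j <;>
    simp only [Matrix.mul_apply, Fin.sum_univ_two, Matrix.star_apply, Matrix.diagonal_apply] <;>
    simp [key, -star_mul]
  · rw [← hx]; exact h₁.star.mul h₁
  · rw [← h0]; exact h₁.star.mul h₂
  · rw [← h0']; exact h₂.star.mul h₁
  · rw [← hy]; exact h₂.star.mul h₂

/-- A column `(s r₁, k r₂)` with `s² = a` and `k² = c` witnesses
`diag(b, 0) ≾ diag(a, c)` as soon as its Gram element tends to `b`. -/
lemma cuntzLeM2_diagonal_of_column [NonUnitalCStarAlgebra A] {s k a b c S T : A}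
    (hs : star s = s) (hsa : s * s = a) (hk : star k = k) (hkc : k * k = c) {r₁ r₂ : ℕ → A}
    (h₁ : Tendsto (fun n => s * r₁ n) atTop (𝓝 S))
    (h₂ : Tendsto (fun n => k * r₂ n) atTop (𝓝 T)) (hb : star S * S + star T * T = b) :
    CuntzLeM2 (Matrix.diagonal ![b, 0]) (Matrix.diagonal ![a, c]) := by
  refine ⟨fun n => !![r₁ n, 0; r₂ n, 0], tendsto_norm_sub_of_entries fun i j => ?_⟩
  have key : ∀ u v : A, star u * a * v = star (s * u) * (s * v) := fun u v => by
    rw [star_mul, hs, ← hsa]; noncomm_ring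
  have key' : ∀ u v : A, star u * c * v = star (k * u) * (k * v) := fun u v => by
    rw [star_mul, hk, ← hkc]; noncomm_ring
  fin_cases i <;> fin_cases j <;>
    simp only [Matrix.mul_apply, Fin.sum_univ_two, Matrix.star_apply, Matrix.diagonal_apply] <;>
    simp [key, key', -star_mul]
  rw [← hb]; exact (h₁.star.mul h₁).add (h₂.star.mul h₂)

/-! ### Almost algebraic order -/

/-- almost algebraic order: if `a' ⊂⊂ a ≾ b` then there is a positive `c` with
`diag(a', c) ≾ diag(b, 0)` and `diag(b, 0) ≾ diag(a, c)` in `M₂(A)`. -/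
theorem almost_algebraic_order [NonUnitalCStarAlgebra A] [PartialOrder A] [StarOrderedRing A]
    (a' a b : A) (ha' : 0 ≤ a') (ha : 0 ≤ a) (hb : 0 ≤ b)
    (h1 : CpctContained a' a) (h2 : CuntzLe a b) :
    ∃ c : A, 0 ≤ c ∧
      CuntzLeM2 (Matrix.diagonal ![a', c]) (Matrix.diagonal ![b, 0]) ∧
      CuntzLeM2 (Matrix.diagonal ![b, 0]) (Matrix.diagonal ![a, c]) := by
  obtain ⟨e, he0, he, hea'⟩ := h1
  obtain ⟨_, ⟨k, rfl⟩, hek⟩ := Metric.mem_closure_iff.1 he (1 / 2) (by norm_num)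
  rw [dist_eq_norm] at hek
  -- The scale `δ` at which everything is cut off; it makes `5 δ ‖k‖ (‖a‖ + 1) ≤ 1 / 2`.
  obtain ⟨δ, hδ, hδ1, hδk⟩ :
      ∃ δ : ℝ, 0 < δ ∧ δ ≤ 1 ∧ 5 * δ * (‖k‖ * (‖a‖ + 1)) ≤ 1 / 2 := by
    have hC : 0 ≤ ‖k‖ * (‖a‖ + 1) := by positivity
    refine ⟨1 / (10 * (‖k‖ * (‖a‖ + 1)) + 1), by positivity, ?_, ?_⟩
    · rw [div_le_one (by positivity)]; linarith
    · rw [mul_one_div, div_mul_eq_mul_div, div_le_iff₀ (by positivity)]; linarith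
  obtain ⟨sb, hsb, hsbb, hsbm⟩ := exists_sqrt hb
  obtain ⟨sa, hsa, hsaa, -⟩ := exists_sqrt ha
  obtain ⟨x, hx⟩ := h2
  obtain ⟨n, hn⟩ := (hx.eventually (gt_mem_nhds hδ)).exists
  set z := x n
  obtain ⟨y, hy⟩ : ∃ y, y = sb * z := ⟨_, rfl⟩
  obtain ⟨p, hp⟩ : ∃ p, p = star y * y := ⟨_, rfl⟩
  have hpz : star z * b * z = p := by
    rw [hp, hy, star_mul, hsb, ← hsbb]; noncomm_ring
  rw [hpz] at hn
  have hp0 : 0 ≤ p := hp ▸ star_mul_self_nonneg y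
  have hpn : ‖p‖ ≤ ‖a‖ + 1 := by
    have := norm_add_le (p - a) a
    rw [sub_add_cancel] at this
    linarith
  obtain ⟨w, g, χ, σ, ψ, hg, hχ, hσ, hψ, hw, hgp, hσσ, hwσ, hψg, hχg⟩ := exists_cutoffs hp0 hδ
  -- `a' = S⋆ S` with `S` in the closed right ideal generated by `g`.
  obtain ⟨S, hSg, hSS⟩ : ∃ S ∈ rightIdeal g, star S * S = a' := by
    obtain ⟨s, hs, hss, hsm⟩ := exists_sqrt ha'
    have hes : e * s = s := mul_eq_self_of_mem_rightIdeal hea' hsm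
    have hE : ‖g * (p * k * p) - e‖ < 1 := by
      have e1 : g * (p * k * p) - e = -(e - a * k * a) - (p - g * p) * (k * p)
          + ((p - a) * (k * p) + a * (k * (p - a))) := by noncomm_ring
      have n1 : ‖(p - g * p) * (k * p)‖ ≤ 3 * δ * (‖k‖ * (‖a‖ + 1)) :=
        (norm_mul_le _ _).trans (mul_le_mul hgp ((norm_mul_le _ _).trans (by gcongr))
          (norm_nonneg _) (by positivity))
      have n2 : ‖(p - a) * (k * p)‖ ≤ δ * (‖k‖ * (‖a‖ + 1)) :=
        (norm_mul_le _ _).trans (mul_le_mul hn.le ((norm_mul_le _ _).trans (by gcongr))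
          (norm_nonneg _) (by positivity))
      have n3 : ‖a * (k * (p - a))‖ ≤ δ * (‖k‖ * (‖a‖ + 1)) := by
        calc ‖a * (k * (p - a))‖ ≤ ‖a‖ * (‖k‖ * ‖p - a‖) :=
              (norm_mul_le _ _).trans (by gcongr; exact norm_mul_le _ _)
          _ ≤ (‖a‖ + 1) * (‖k‖ * δ) := by gcongr; linarith
          _ = _ := by ring
      rw [e1]
      have t1 := norm_add_le (-(e - a * k * a) - (p - g * p) * (k * p))
        ((p - a) * (k * p) + a * (k * (p - a)))
      have t2 := norm_sub_le (-(e - a * k * a)) ((p - g * p) * (k * p))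
      have t3 := norm_add_le ((p - a) * (k * p)) (a * (k * (p - a)))
      rw [norm_neg] at t2
      linarith
    obtain ⟨S, hS, hSS⟩ := exists_mem_rightIdeal_star_mul_self (s := s) (d := g)
      (r := p * k * p * s) hE (by rw [sub_mul, hes]; noncomm_ring)
    exact ⟨S, hg ▸ hS, by rw [hSS, hs, hss]⟩
  -- `σ² = Q⋆ Q` with `Q` in the closed right ideal generated by `a`.
  obtain ⟨Q, hQa, hQQ⟩ : ∃ Q ∈ rightIdeal a, star Q * Q = σ * σ := by
    have hE : ‖w * (a - p)‖ < 1 := by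
      rw [norm_sub_rev] at hn
      calc ‖w * (a - p)‖ ≤ ‖w‖ * ‖a - p‖ := norm_mul_le _ _
        _ ≤ δ⁻¹ * ‖a - p‖ := by gcongr
        _ < δ⁻¹ * δ := by gcongr
        _ = 1 := inv_mul_cancel₀ hδ.ne'
    obtain ⟨Q, hQ, hQQ⟩ := exists_mem_rightIdeal_star_mul_self (s := σ) (d := w * a) (r := σ) hE
      (by rw [mul_sub, sub_mul, hwσ]; abel)
    rw [star_mul, (IsSelfAdjoint.of_nonneg ha).star_eq] at hQ
    exact ⟨Q, rightIdeal_mul_subset _ _ hQ, by rw [hQQ, hσ]⟩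
  -- `H` is `h(y y⋆)`, and `c = R₂⋆ R₂ = √b (1 - H)² √b` with `R₂ = (1 - H) √b`.
  obtain ⟨H, hH⟩ : ∃ H, H = y * χ * star y := ⟨_, rfl⟩
  have hHs : star H = H := by
    rw [hH, star_mul, star_mul, star_star, hχ, mul_assoc]
  set R₂ := sb - H * sb with hR₂
  have hc : 0 ≤ star R₂ * R₂ := star_mul_self_nonneg R₂
  obtain ⟨sc, hsc, hscc, hscm⟩ := exists_sqrt hc
  refine ⟨star R₂ * R₂, hc, ?_, ?_⟩
  · obtain ⟨v, hv⟩ := exists_seq_mul_tendsto hsbb hsbm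
    refine cuntzLeM2_diagonal_of_row (R₁ := y * (ψ * S)) (R₂ := R₂) hsb hsbb
      (r₁ := fun _ => z * (ψ * S)) (r₂ := fun n => v n - z * χ * star y * sb)
      ?_ ?_ ?_ rfl ?_
    · rw [hy, mul_assoc sb]
      exact tendsto_const_nhds
    · have : ∀ n, sb * (v n - z * χ * star y * sb) = sb * v n - H * sb := fun n => by
        rw [hH, mul_sub]
        nth_rw 2 [hy]
        simp only [mul_assoc]
      simp only [this]
      exact hv.sub_const _
    · have hS : (ψ * p * ψ) * S = S := mul_eq_self_of_mem_rightIdeal hψg hSg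
      calc star (y * (ψ * S)) * (y * (ψ * S)) = star S * ((ψ * p * ψ) * S) := by
            rw [star_mul, star_mul, hψ, hp]; noncomm_ring
        _ = a' := by rw [hS, hSS]
    · have hS : (χ * p * ψ) * S = ψ * S := mul_eq_mul_of_mem_rightIdeal hχg hSg
      have hHR : H * (y * (ψ * S)) = y * (ψ * S) := by
        calc H * (y * (ψ * S)) = y * ((χ * p * ψ) * S) := by rw [hH, hp]; noncomm_ring
          _ = _ := by rw [hS]
      have : star (y * (ψ * S)) * H = star (y * (ψ * S)) := by
        conv_rhs => rw [← hHR, star_mul, hHs]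
      rw [hR₂, mul_sub, ← mul_assoc _ H, this, sub_self]
  · obtain ⟨r, hr⟩ := exists_seq_mul_tendsto hsaa hQa
    obtain ⟨v, hv⟩ := exists_seq_mul_tendsto hscc hscm
    refine cuntzLeM2_diagonal_of_column (S := Q * (star y * sb)) (T := sc) hsa hsaa hsc hscc
      (r₁ := fun n => r n * (star y * sb)) (r₂ := v) ?_ hv ?_
    · simp only [← mul_assoc sa]
      exact hr.mul_const _
    -- `√b (2 H - H²) √b + √b (1 - H)² √b = b`.
    · have hQ : star (Q * (star y * sb)) * (Q * (star y * sb)) = sb * (H + H - H * H) * sb := by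
        calc _ = sb * y * (star Q * Q) * star y * sb := by
              rw [star_mul, star_mul, star_star, hsb]; noncomm_ring
          _ = _ := by rw [hQQ, hσσ, hH, hp]; noncomm_ring
      rw [hQ, hsc, hscc, hR₂, star_sub, star_mul, hsb, hHs, ← hsbb]
      noncomm_ring
end
end

section
/- Let A be a C*-algebra and let a, b be positive elements of A. If a ≾_s b then a ≾ b; and if a ∼_s b then a ≈ b. -/
/-!
Everything reduces to one fact: `√a` lies in the closed right ideal generated by `a`, since
`a * g_ε(a) → √a` in norm for `g_ε(t) = √t / (t + ε)`. From it one gets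

* `mem_herSub_self`: a positive `a` lies in its own hereditary subalgebra;
* `cuntzLe_of_mem_rightIdeal`: if a positive `a` lies in the closed right ideal of `b` then so does
  `√a`, and approximating `√a ≈ b * y` gives `a ≈ (b * y)* (b * y) = z* b z` with `z = √b * y`;
* `cuntzLe_star_mul_self`: with `h = x* x` and `√h ≈ h * y` one gets
  `h ≈ (h * y)* (h * y) = z* (x x*) z` with `z = x * y`.

As Cuntz subequivalence is transitive, `a ∼ₛ b` yields `a ≾ x* x ≾ x x* ≾ b`, and `∼ₛ` is
symmetric through `x ↦ x*`.
-/

open Filter Topology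

noncomputable section

variable {A : Type*}

section CuntzComparison

variable [NonUnitalCStarAlgebra A]

/-- Cuntz subequivalence as membership in a norm closure, the form in which all the approximation
arguments are carried out. -/
lemma cuntzLe_iff_mem_closure {a b : A} :
    CuntzLe a b ↔ a ∈ closure (Set.range fun x : A => star x * b * x) := by
  rw [mem_closure_iff_seq_limit]
  constructor
  · rintro ⟨x, hx⟩
    exact ⟨fun n => star (x n) * b * x n, fun n => ⟨x n, rfl⟩,
      tendsto_iff_norm_sub_tendsto_zero.2 hx⟩
  · rintro ⟨u, hu, hlim⟩
    choose x hx using hu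
    refine ⟨x, ?_⟩
    obtain rfl : (fun n => star (x n) * b * x n) = u := funext hx
    exact tendsto_iff_norm_sub_tendsto_zero.1 hlim

lemma CuntzLe.trans {a b c : A} (hab : CuntzLe a b) (hbc : CuntzLe b c) : CuntzLe a c := by
  rw [cuntzLe_iff_mem_closure] at *
  refine closure_minimal ?_ isClosed_closure hab
  rintro _ ⟨x, rfl⟩
  refine map_mem_closure (f := fun z : A => star x * z * x) (by fun_prop) hbc ?_
  rintro _ ⟨y, rfl⟩
  exact ⟨y * x, by simp [mul_assoc]⟩

/-- If `a = c* c` with `c` in the closed right ideal of `b`, and each `(b * y)* (b * y)` has the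
form `z* d z`, then `a ≾ d`. -/
lemma cuntzLe_of_rightIdeal {b c d : A} (hc : c ∈ rightIdeal b)
    (hd : ∀ y : A, ∃ z : A, star z * d * z = star (b * y) * (b * y)) :
    CuntzLe (star c * c) d := by
  rw [cuntzLe_iff_mem_closure]
  refine map_mem_closure (f := fun z : A => star z * z) (by fun_prop) hc ?_
  rintro _ ⟨y, rfl⟩
  exact hd y

lemma rightIdeal_subset {a b : A} (h : a ∈ rightIdeal b) : rightIdeal a ⊆ rightIdeal b := by
  refine closure_minimal ?_ isClosed_closure
  rintro _ ⟨x, rfl⟩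
  refine map_mem_closure (f := fun z : A => z * x) (by fun_prop) h ?_
  rintro _ ⟨y, rfl⟩
  exact ⟨y * x, by simp [mul_assoc]⟩

lemma herSub_subset_rightIdeal (b : A) : herSub b ⊆ rightIdeal b := by
  refine closure_mono ?_
  rintro _ ⟨x, rfl⟩
  exact ⟨x * b, by simp [mul_assoc]⟩

lemma BlackadarEquiv.symm {a b : A} (h : BlackadarEquiv a b) : BlackadarEquiv b a := by
  obtain ⟨x, hax, hbx⟩ := h
  exact ⟨star x, by rwa [star_star], by rwa [star_star]⟩

variable [PartialOrder A] [StarOrderedRing A]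

/-- A positive `a` has a self-adjoint square root in the closed right ideal generated by `a`. -/
lemma exists_sqrt_mem_rightIdeal {a : A} (ha : 0 ≤ a) :
    ∃ c : A, star c = c ∧ c * c = a ∧ c ∈ rightIdeal a := by
  have hsa : IsSelfAdjoint a := .of_nonneg ha
  have hspec : ∀ t ∈ quasispectrum ℝ a, 0 ≤ t := fun t ht => quasispectrum_nonneg_of_nonneg a ha t ht
  refine ⟨cfcₙ Real.sqrt a, (cfcₙ_predicate Real.sqrt a : IsSelfAdjoint _).star_eq, ?_, ?_⟩
  · rw [← cfcₙ_mul Real.sqrt Real.sqrt a (by fun_prop) (by simp) (by fun_prop) (by simp)]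
    conv_rhs => rw [← cfcₙ_id ℝ a]
    exact cfcₙ_congr fun t ht => Real.mul_self_sqrt (hspec t ht)
  · refine Metric.mem_closure_iff.2 fun δ hδ => ?_
    -- The error `√t * ε / (t + ε)` is at most `√ε`, so `ε = (δ / 2) ^ 2` suffices.
    obtain ⟨r, hr, hrδ⟩ : ∃ r : ℝ, 0 < r ∧ r < δ := ⟨δ / 2, by linarith, by linarith⟩
    -- The absolute value makes `g` continuous on all of `ℝ`.
    let g : ℝ → ℝ := fun t => √t / (|t| + r ^ 2)
    have hg : Continuous g :=
      Real.continuous_sqrt.div (by fun_prop) fun t => by positivity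
    have hg0 : g 0 = 0 := by simp [g]
    refine ⟨a * cfcₙ g a, ⟨_, rfl⟩, ?_⟩
    have hmul : a * cfcₙ g a = cfcₙ (fun t => t * g t) a := by
      rw [cfcₙ_mul (fun t => t) g a (by fun_prop) rfl hg.continuousOn hg0, cfcₙ_id' ℝ a]
    rw [dist_eq_norm, hmul, ← cfcₙ_sub Real.sqrt (fun t => t * g t) a (by fun_prop) (by simp)
      (by fun_prop) (by simp)]
    refine lt_of_le_of_lt (norm_cfcₙ_le fun t ht => ?_) hrδ
    have ht0 := hspec t ht
    obtain ⟨s, hs, rfl⟩ : ∃ s : ℝ, 0 ≤ s ∧ t = s ^ 2 := ⟨√t, by positivity, by simp [ht0]⟩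
    have hpos : 0 < s ^ 2 + r ^ 2 := by positivity
    have heq : √(s ^ 2) - s ^ 2 * g (s ^ 2) = s * r ^ 2 / (s ^ 2 + r ^ 2) := by
      simp only [g, Real.sqrt_sq hs, abs_of_nonneg ht0]
      field_simp
      ring
    rw [heq, Real.norm_of_nonneg (by positivity), div_le_iff₀ hpos]
    nlinarith [mul_nonneg hr.le (sq_nonneg (s - r)), mul_nonneg hr.le (sq_nonneg s),
      mul_nonneg hr.le (sq_nonneg (s + r)), pow_pos hr 3]

lemma mem_herSub_self {a : A} (ha : 0 ≤ a) : a ∈ herSub a := by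
  obtain ⟨c, hcs, hcc, hc⟩ := exists_sqrt_mem_rightIdeal ha
  have key : c * star c ∈ herSub a := by
    refine map_mem_closure (f := fun z : A => z * star z) (by fun_prop) hc ?_
    rintro _ ⟨y, rfl⟩
    exact ⟨y * star y, by simp [mul_assoc, (IsSelfAdjoint.of_nonneg ha).star_eq]⟩
  rwa [hcs, hcc] at key

lemma cuntzLe_of_mem_rightIdeal {a b : A} (ha : 0 ≤ a) (hb : 0 ≤ b) (h : a ∈ rightIdeal b) :
    CuntzLe a b := by
  obtain ⟨c, hcs, hcc, hc⟩ := exists_sqrt_mem_rightIdeal ha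
  obtain ⟨d, hds, hdd, -⟩ := exists_sqrt_mem_rightIdeal hb
  have := cuntzLe_of_rightIdeal (d := b) (rightIdeal_subset h hc)
    fun y => ⟨d * y, by simp [← hdd, hds, mul_assoc]⟩
  rwa [hcs, hcc] at this

lemma cuntzLe_of_herSub_eq {a b : A} (ha : 0 ≤ a) (hb : 0 ≤ b) (h : herSub a = herSub b) :
    CuntzLe a b :=
  cuntzLe_of_mem_rightIdeal ha hb (herSub_subset_rightIdeal b (h ▸ mem_herSub_self ha))

lemma cuntzLe_star_mul_self (x : A) : CuntzLe (star x * x) (x * star x) := by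
  obtain ⟨c, hcs, hcc, hc⟩ := exists_sqrt_mem_rightIdeal (star_mul_self_nonneg x)
  have := cuntzLe_of_rightIdeal (d := x * star x) hc fun y => ⟨x * y, by simp [mul_assoc]⟩
  rwa [hcs, hcc] at this

lemma BlackadarEquiv.cuntzLe {a b : A} (ha : 0 ≤ a) (hb : 0 ≤ b) (h : BlackadarEquiv a b) :
    CuntzLe a b := by
  obtain ⟨x, hax, hbx⟩ := h
  exact ((cuntzLe_of_herSub_eq ha (star_mul_self_nonneg x) hax).trans
    (cuntzLe_star_mul_self x)).trans (cuntzLe_of_herSub_eq (mul_star_self_nonneg x) hb hbx.symm)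

end CuntzComparison

/-- `a ≾ₛ b` implies `a ≾ b`, and `a ∼ₛ b` implies `a ≈ b`. -/
theorem blackadar_implies_cuntz [NonUnitalCStarAlgebra A] [PartialOrder A]
    [StarOrderedRing A] (a b : A) (ha : 0 ≤ a) (hb : 0 ≤ b) :
    (BlackadarLe a b → CuntzLe a b) ∧ (BlackadarEquiv a b → CuntzEquiv a b) := by
  refine ⟨?_, fun h => ⟨h.cuntzLe ha hb, h.symm.cuntzLe hb ha⟩⟩
  rintro ⟨a', ha', hmem, h⟩
  exact (h.cuntzLe ha ha').trans
    (cuntzLe_of_mem_rightIdeal ha' hb (herSub_subset_rightIdeal b hmem))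
end
end
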